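/- Let p, q be real numbers, let k be a positive integer with U_k(p,q) ≠ 0, let d ≥ 1, and let n ≥ d. Then Σ_{j=0}^{d} (4q^k)^(d−j) · (Σ_{i=0}^{j} (−1)^i · binom(j,i) · (j+1−i)^d) · ((V_k(p,q)² − 4q^k)/U_k(p,q))^j · s_{j+1}(n+j−d; p,q; k) = Σ_{j=1}^{d} ((−1)^(d−1) · (2q^k)^(d−j) / (j−1)!) · (Σ_{i=0}^{j−1} (−1)^i · binom(j−1,i) · (i+1)^(d−1)) · (Σ_{s=0}^{j} binom(j,s) · (−2q^k)^s · V_k(p,q)^(j−s) · (∏_{i=1}^{j} (n+j−d−s−i)) · U_{(n+j−d−s)·k}(p,q)), where the factors n+j−d−s−i in the product are taken as (possibly negative) integers. -/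

import Mathlib

/-- The generalized Fibonacci sequence: `U 0 = 0`, `U 1 = 1`,
`U (n+2) = p * U (n+1) - q * U n`. -/
def genU (p q : ℝ) : ℕ → ℝ
  | 0 => 0
  | 1 => 1
  | (n + 2) => p * genU p q (n + 1) - q * genU p q n

/-- The generalized Lucas sequence: `V 0 = 2`, `V 1 = p`,
`V (n+2) = p * V (n+1) - q * V n`. -/
def genV (p q : ℝ) : ℕ → ℝ
  | 0 => 2
  | 1 => p
  | (n + 2) => p * genV p q (n + 1) - q * genV p q n

/-- `s_d(n; p, q; k) = ∑_{j₁ + ⋯ + j_d = n} ∏_{i=1}^{d} U_{k jᵢ}(p, q)`,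
the sum being over `d`-tuples of nonnegative integers. -/
def sgen (p q : ℝ) (k d n : ℕ) : ℝ :=
  ∑ t ∈ Finset.Nat.antidiagonalTuple d n, ∏ i, genU p q (k * t i)


open Finset PowerSeries

lemma genU_rec (p q : ℝ) (n : ℕ) :
    genU p q (n + 2) = p * genU p q (n + 1) - q * genU p q n := by rw [genU]

lemma aux_add (p q : ℝ) (m n : ℕ) :
    genU p q (m + n + 1) = genU p q (m+1) * genU p q (n+1) - q * genU p q m * genU p q n := by
  induction m using Nat.twoStepInduction with
  | zero => simp [genU]
  | one =>
    rw [show 1 + n + 1 = n + 2 by ring]; simp [genU]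
  | more m h1 h2 =>
    rw [show m + 2 + n + 1 = (m + n + 1) + 2 by ring, genU,
      show m + n + 1 + 1 = m + 1 + n + 1 by ring, h1, h2, show m + 2 + 1 = (m+1) + 2 by ring,
      genU_rec p q (m+1), show m + 1 + 1 = m + 2 by ring, genU_rec]
    ring

lemma aux_V (p q : ℝ) (k : ℕ) : genV p q k = 2 * genU p q (k+1) - p * genU p q k := by
  induction k using Nat.twoStepInduction with
  | zero => simp [genU, genV]
  | one => simp [genU, genV]; ring
  | more m h1 h2 =>
    rw [genV, h1, h2, show m + 2 + 1 = (m+1) + 2 by ring, genU_rec p q (m+1),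
      show m + 1 + 1 = m + 2 by ring, genU_rec]
    ring

lemma aux_cassini (p q : ℝ) (k : ℕ) :
    genU p q (k+1) ^ 2 - p * genU p q (k+1) * genU p q k + q * genU p q k ^ 2 = q ^ k := by
  induction k with
  | zero => simp [genU]
  | succ m h =>
    rw [genU, pow_succ q m, ← h]
    ring

lemma aux_two (p q : ℝ) (k m : ℕ) :
    genU p q (m + k + k) = genV p q k * genU p q (m + k) - q ^ k * genU p q m := by
  induction m using Nat.twoStepInduction with
  | zero =>
    cases k with
    | zero => simp [genU]
    | succ k =>
      have h := aux_add p q (k+1) k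
      rw [show 0 + (k+1) + (k+1) = (k + 1) + k + 1 by ring, h, aux_V, zero_add]
      simp only [genU]
      ring
  | one =>
    rw [show 1 + k + k = k + k + 1 by ring, aux_add, aux_V, ← aux_cassini, add_comm 1 k]
    simp only [genU]
    ring
  | more m h1 h2 =>
    rw [show m + 2 + k + k = (m + k + k) + 2 by ring, genU,
      show m + k + k + 1 = m + 1 + k + k by ring, h1, h2,
      show m + 2 + k = (m + k) + 2 by ring, genU, genU,
      show m + k + 1 = m + 1 + k by ring]
    ring

/-- coefficients -/
def cc (d j : ℕ) : ℝ := ∑ i ∈ Finset.range (j + 1),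
          (-1 : ℝ) ^ i * (Nat.choose j i : ℝ) * ((j : ℝ) + 1 - (i : ℝ)) ^ d

lemma cc_zero_right (d : ℕ) : cc d 0 = 1 := by simp [cc]

lemma cc_zero_succ (j : ℕ) : cc 0 (j+1) = 0 := by
  have h := Int.alternating_sum_range_choose_of_ne (n := j+1) (by simp)
  have h' := congrArg (Int.cast (R := ℝ)) h
  push_cast at h'
  simpa [cc] using h'

lemma cc_rec (d j : ℕ) : cc (d+1) (j+1) = (j+2) * cc d (j+1) + (j+1) * cc d j := by
  have key : ∑ i ∈ Finset.range (j + 2), (-1 : ℝ) ^ i * (i * (Nat.choose (j+1) i : ℝ)) *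
      ((j : ℝ) + 2 - (i : ℝ)) ^ d = - ((j+1) * cc d j) := by
    rw [Finset.sum_range_succ', cc, Finset.mul_sum, ← Finset.sum_neg_distrib]
    simp only [Nat.cast_zero, zero_mul, mul_zero, add_zero]
    refine Finset.sum_congr rfl fun i _ => ?_
    have h : ((j:ℝ)+1) * (Nat.choose j i) = Nat.choose (j+1) (i+1) * (i+1) := by
      exact_mod_cast Nat.add_one_mul_choose_eq j i
    push_cast
    rw [mul_comm ((i:ℝ)+1), ← h, show (j:ℝ)+2-(i+1) = j + 1 - i by ring]
    ring
  rw [← neg_neg ((j+1) * cc d j), ← key, cc, cc, Finset.mul_sum, ← sub_eq_add_neg,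
    ← Finset.sum_sub_distrib]
  refine Finset.sum_congr rfl fun i _ => ?_
  push_cast
  rw [show (j:ℝ)+1+1-i = j + 2 - i by ring]
  ring

lemma cc_vanish (d j : ℕ) (h : d < j) : cc d j = 0 := by
  induction d generalizing j with
  | zero => obtain ⟨j, rfl⟩ := Nat.exists_eq_succ_of_ne_zero h.ne'; exact cc_zero_succ j
  | succ d ih =>
    obtain ⟨j, rfl⟩ := Nat.exists_eq_succ_of_ne_zero (by omega : j ≠ 0)
    rw [Nat.succ_eq_add_one, cc_rec, ih _ (by omega), ih _ (by omega)]; simp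

lemma cc_flip (d j : ℕ) : ∑ i ∈ Finset.range (j + 1),
          (-1 : ℝ) ^ i * (Nat.choose j i : ℝ) * ((i : ℝ) + 1) ^ d = (-1) ^ j * cc d j := by
  rw [← Finset.sum_range_reflect, cc, Finset.mul_sum]
  refine Finset.sum_congr rfl fun i hi => ?_
  have hi : i ≤ j := by simpa [Nat.lt_succ_iff] using hi
  rw [show j + 1 - 1 - i = j - i by omega, Nat.choose_symm hi, Nat.cast_sub hi]
  have : (-1:ℝ)^(j-i) = (-1)^j * (-1)^i := by
    rw [← pow_add, show j + i = (j - i) + 2 * i by omega, pow_add, pow_mul]; simp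
  rw [this, show (j:ℝ) - i + 1 = j + 1 - i by ring]
  ring

/-- the generating function -/
noncomputable def WW (p q : ℝ) (k : ℕ) : PowerSeries ℝ := PowerSeries.mk fun r => genU p q ((r+1)*k)
/-- denominator -/
noncomputable def PP (a b : ℝ) : PowerSeries ℝ := 1 - C a * X + C b * X^2

lemma WP (p q : ℝ) (k : ℕ) : WW p q k * PP (genV p q k) (q^k) = C (genU p q k) := by
  ext n
  rw [PP, show WW p q k * (1 - C (genV p q k) * X + C (q^k) * X^2) =
    WW p q k - C (genV p q k) * (X^1 * WW p q k) + C (q^k) * (X^2 * WW p q k) by ring]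
  simp only [map_add, map_sub, coeff_C_mul, coeff_X_pow_mul', WW, coeff_mk, coeff_C]
  rcases n with _ | _ | n
  · simp
  · have := aux_two p q k 0
    simp [genU] at this
    simp [two_mul, add_mul, this]
  · have := aux_two p q k ((n+1)*k)
    simp
    rw [show (n+1+1+1)*k = (n+1)*k+k+k by ring, this]
    ring_nf

lemma sgen_eq (p q : ℝ) (k d n : ℕ) : sgen p q k d n = coeff n ((X * WW p q k)^d) := by
  have hG : ∀ m, coeff m (X * WW p q k) = genU p q (k * m) := by
    intro m
    cases m with
    | zero => simp [genU]
    | succ m => rw [coeff_succ_X_mul, WW, coeff_mk, mul_comm]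
  induction d generalizing n with
  | zero => 
    cases n <;> simp [sgen, coeff_one]
  | succ d ih =>
    rw [pow_succ', coeff_mul]
    simp only [← ih, hG]
    change ((List.Nat.antidiagonalTuple (d+1) n).map
      (fun t => ∏ i, genU p q (k * t i))).sum = ((List.Nat.antidiagonal n).map
      (fun x => genU p q (k * x.1) * ((List.Nat.antidiagonalTuple d x.2).map
      (fun t => ∏ i, genU p q (k * t i))).sum)).sum
    rw [List.Nat.antidiagonalTuple, List.map_flatMap, List.flatMap, List.sum_flatten]
    simp [Function.comp_def, Fin.prod_univ_succ, List.sum_map_mul_left]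


lemma gen_iter (T : PowerSeries ℝ →ₗ[ℝ] PowerSeries ℝ) (E : ℕ → PowerSeries ℝ) (x : ℝ)
    (h : ∀ j, T (E j) = ((j:ℝ)+1) • (x • E j + E (j+1))) (d : ℕ) :
    T^[d] (E 0) = ∑ j ∈ Finset.range (d+1), (x^(d-j) * cc d j) • E j := by
  induction d with
  | zero => simp [cc_zero_right]
  | succ d ih =>
    rw [Function.iterate_succ_apply', ih, map_sum, Finset.sum_range_succ' _ (d+1)]
    have h1 : ∀ j ∈ Finset.range (d+1), T ((x^(d-j) * cc d j) • E j) =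
        (x^(d+1-j) * cc d j * (j+1)) • E j + (x^(d-j) * cc d j * (j+1)) • E (j+1) := by
      intro j hj
      have hj : j ≤ d := by simpa [Nat.lt_succ_iff] using hj
      rw [map_smul, h, show d + 1 - j = (d - j) + 1 by omega]
      module
    have h2 : ∑ j ∈ Finset.range (d+1), (x^(d+1-j) * cc d j * (j+1)) • E j =
        ∑ j ∈ Finset.range (d+1), (x^(d-j) * cc d (j+1) * (j+2)) • E (j+1) + x^(d+1) • E 0 := by
      have := Finset.sum_range_succ (fun j : ℕ => (x^(d+1-j) * cc d j * (j+1)) • E j) (d+1)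
      rw [cc_vanish d (d+1) (by omega)] at this
      simp only [mul_zero, zero_mul, zero_smul, add_zero] at this
      rw [← this, Finset.sum_range_succ']
      congr 1
      · refine Finset.sum_congr rfl fun j _ => ?_
        rw [Nat.add_sub_add_right]
        push_cast
        congr 1; ring
      · simp [cc_zero_right]
    rw [Finset.sum_congr rfl h1, Finset.sum_add_distrib, h2, add_right_comm,
      ← Finset.sum_add_distrib]
    congr 1
    · refine Finset.sum_congr rfl fun j _ => ?_
      rw [Nat.add_sub_add_right, cc_rec]
      module
    · simp [cc_zero_right]

lemma theta_W (p q : ℝ) (k : ℕ) (hU : genU p q k ≠ 0) :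
    (C (genV p q k) - 2 * C (q^k) * X) * d⁄dX ℝ (WW p q k) =
    4 * C (q^k) * WW p q k + C ((genV p q k ^ 2 - 4 * q^k) / genU p q k) * WW p q k ^ 2 := by
  have hW := WP p q k
  set W := WW p q k
  set a := genV p q k
  set b := q ^ k
  set u := genU p q k
  have hd : d⁄dX ℝ (PP a b) = - (C a - 2 * C b * X) := by
    simp [PP, Derivation.leibniz, Derivation.leibniz_pow]
    ring
  have hL : (C a - 2 * C b * X)^2 = 4 * C b * PP a b + C (a^2-4*b) := by
    simp only [PP, map_sub, map_mul, map_pow]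
    rw [show (C (4:ℝ) : PowerSeries ℝ) = 4 from map_ofNat _ 4]
    ring
  have h1 := congrArg (d⁄dX ℝ) hW
  rw [Derivation.leibniz, derivative_C, hd] at h1
  simp only [smul_eq_mul] at h1
  have hu : (C u : PowerSeries ℝ) ≠ 0 := by simpa using hU
  have hD : (C u : PowerSeries ℝ) * C ((a^2-4*b)/u) = C (a^2-4*b) := by
    rw [← map_mul]; congr 1; field_simp
  apply mul_left_cancel₀ hu
  set L : PowerSeries ℝ := C a - 2 * C b * X
  linear_combination (-L * d⁄dX ℝ W + 4 * C b * W) * hW + W * L * h1 + W^2 * hL - W^2 * hD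

/-- the operator -/
noncomputable def TT (a b : ℝ) : PowerSeries ℝ →ₗ[ℝ] PowerSeries ℝ :=
  LinearMap.mulLeft ℝ (C a - 2 * C b * X) ∘ₗ (d⁄dX ℝ).toLinearMap

lemma TT_apply (a b : ℝ) (F : PowerSeries ℝ) : TT a b F = (C a - 2 * C b * X) * d⁄dX ℝ F := rfl

lemma lhs_iter (p q : ℝ) (k : ℕ) (hU : genU p q k ≠ 0) (d : ℕ) :
    (TT (genV p q k) (q^k))^[d] (WW p q k) = ∑ j ∈ Finset.range (d+1),
      ((4*q^k)^(d-j) * cc d j) •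
        ((((genV p q k ^ 2 - 4 * q^k) / genU p q k)^j) • WW p q k ^ (j+1)) := by
  have := gen_iter (TT (genV p q k) (q^k))
    (fun j => (((genV p q k ^ 2 - 4 * q^k) / genU p q k)^j) • WW p q k ^ (j+1)) (4 * q^k) ?_ d
  · simpa using this
  intro j
  have h := theta_W p q k hU
  rw [map_smul, TT_apply, Derivation.leibniz_pow]
  simp only [Nat.add_sub_cancel, smul_eq_mul, nsmul_eq_mul, PowerSeries.smul_eq_C_mul]
  simp only [map_add, map_mul, map_pow, map_natCast, map_one]
  rw [show (C (4:ℝ) : PowerSeries ℝ) = 4 from map_ofNat _ 4]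
  push_cast
  simp only [map_pow] at h
  linear_combination (C ((genV p q k ^ 2 - 4 * q ^ k) / genU p q k)) ^ j *
    ((j : PowerSeries ℝ) + 1) * WW p q k ^ j * h

lemma rhs_iter (a b : ℝ) (W : PowerSeries ℝ) (d : ℕ) :
    (TT a b)^[d+1] W = ∑ j ∈ Finset.range (d+1),
      ((-2*b)^(d-j) * cc d j) •
        ((1 / (Nat.factorial j : ℝ)) • ((C a - 2 * C b * X)^(j+1) * (d⁄dX ℝ)^[j+1] W)) := by
  have := gen_iter (TT a b)
    (fun j => (1 / (Nat.factorial j : ℝ)) • ((C a - 2 * C b * X)^(j+1) * (d⁄dX ℝ)^[j+1] W))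
      (-2 * b) ?_ d
  · rw [← this]; simp [TT_apply]
  intro j
  have hd : d⁄dX ℝ (C a - 2 * C b * X) = - (2 * C b) := by
    rw [show (2 : PowerSeries ℝ) = C 2 from (map_ofNat _ 2).symm]
    simp [Derivation.leibniz]
  have hf : (1 / (Nat.factorial j : ℝ)) = (j+1) * (1 / (Nat.factorial (j+1) : ℝ)) := by
    rw [Nat.factorial_succ]; push_cast
    have : (Nat.factorial j : ℝ) ≠ 0 := by exact_mod_cast Nat.factorial_ne_zero j
    field_simp
  rw [map_smul, TT_apply, Derivation.leibniz, Derivation.leibniz_pow, hd,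
    Function.iterate_succ_apply' _ (j+1), hf]
  simp only [Nat.add_sub_cancel, smul_eq_mul, nsmul_eq_mul, PowerSeries.smul_eq_C_mul]
  simp only [map_add, map_mul, map_pow, map_natCast, map_one, map_neg]
  rw [show (C (2:ℝ) : PowerSeries ℝ) = 2 from map_ofNat _ 2]
  push_cast
  ring

lemma coeff_iter (p q : ℝ) (k j m : ℕ) : coeff m ((d⁄dX ℝ)^[j] (WW p q k)) =
    (∏ i ∈ Finset.Icc 1 j, ((m:ℝ) + 1 + j - i)) * genU p q ((m + 1 + j) * k) := by
  induction j generalizing m with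
  | zero => simp [WW]
  | succ j ih =>
    rw [Function.iterate_succ_apply', coeff_derivative, ih, Finset.prod_Icc_succ_top (by omega)]
    push_cast
    rw [show m + 1 + 1 + j = m + 1 + (j + 1) by ring, show (m:ℝ)+1+1+j = m + 1 + (j+1) by ring]
    ring

lemma coeff_T (p q : ℝ) (k j N : ℕ) (a b : ℝ) :
    coeff N (X * ((C a - 2 * C b * X)^j * (d⁄dX ℝ)^[j] (WW p q k))) =
    ∑ s ∈ Finset.range (j + 1), (Nat.choose j s : ℝ) * (-2 * b) ^ s * a ^ (j - s) *
            (∏ i ∈ Finset.Icc 1 j, ((N : ℝ) + (j : ℝ) - (s : ℝ) - (i : ℝ))) *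
            genU p q ((N + j - s) * k) := by
  rw [show (C a - 2 * C b * X : PowerSeries ℝ) = C (-2*b) * X + C a by
    rw [map_mul, map_neg, show (C (2:ℝ) : PowerSeries ℝ) = 2 from map_ofNat _ 2]; ring,
    add_pow, Finset.sum_mul, Finset.mul_sum, map_sum]
  refine Finset.sum_congr rfl fun s hs => ?_
  have hs : s ≤ j := by simpa [Nat.lt_succ_iff] using hs
  rw [show X * ((C (-2*b) * X)^s * C a ^ (j-s) * (Nat.choose j s : PowerSeries ℝ) *
      (d⁄dX ℝ)^[j] (WW p q k)) = C ((Nat.choose j s : ℝ) * (-2 * b) ^ s * a ^ (j - s)) *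
      (X^(s+1) * (d⁄dX ℝ)^[j] (WW p q k)) by
    simp only [map_mul, map_pow, map_natCast]; ring, coeff_C_mul, coeff_X_pow_mul']
  rw [mul_assoc (_ * _ * _)]
  congr 1
  split_ifs with h
  · obtain ⟨m, rfl⟩ := Nat.exists_eq_add_of_le h
    rw [coeff_iter, show s + 1 + m - (s+1) = m by omega,
      show s + 1 + m + j - s = m + 1 + j by omega]
    congr 1
    refine Finset.prod_congr rfl fun i _ => ?_
    push_cast; ring
  · rcases Nat.eq_zero_or_pos (N + j - s) with h0 | h0
    · rw [h0]; simp [genU]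
    · rw [Finset.prod_eq_zero (i := N + j - s) (by simp; omega), zero_mul]
      rw [Nat.cast_sub (by omega)]; push_cast; ring

/-- The main recurrence relating `s_{j+1}` for `0 ≤ j ≤ d`. -/
theorem stmt_4 (p q : ℝ) (k : ℕ) (hk : 1 ≤ k) (hU : genU p q k ≠ 0)
    (d : ℕ) (hd : 1 ≤ d) (n : ℕ) (hn : d ≤ n) :
    ∑ j ∈ Finset.range (d + 1),
      (4 * q ^ k) ^ (d - j) *
        (∑ i ∈ Finset.range (j + 1),
          (-1 : ℝ) ^ i * (Nat.choose j i : ℝ) * ((j : ℝ) + 1 - (i : ℝ)) ^ d) *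
        (((genV p q k) ^ 2 - 4 * q ^ k) / genU p q k) ^ j *
        sgen p q k (j + 1) (n + j - d) =
    ∑ j ∈ Finset.Icc 1 d,
      ((-1 : ℝ) ^ (d - 1) * (2 * q ^ k) ^ (d - j) / (Nat.factorial (j - 1) : ℝ)) *
        (∑ i ∈ Finset.range j,
          (-1 : ℝ) ^ i * (Nat.choose (j - 1) i : ℝ) * ((i : ℝ) + 1) ^ (d - 1)) *
        (∑ s ∈ Finset.range (j + 1),
          (Nat.choose j s : ℝ) * (-2 * q ^ k) ^ s * (genV p q k) ^ (j - s) *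
            (∏ i ∈ Finset.Icc 1 j,
              ((n : ℝ) + (j : ℝ) - (d : ℝ) - (s : ℝ) - (i : ℝ))) *
            genU p q ((n + j - d - s) * k)) := by
  obtain ⟨N, rfl⟩ := Nat.exists_eq_add_of_le hn
  obtain ⟨d, rfl⟩ := Nat.exists_eq_add_of_le' hd
  have key := congrArg (fun F => coeff N (X * F))
    ((lhs_iter p q k hU (d+1)).symm.trans (rhs_iter (genV p q k) (q^k) (WW p q k) d))
  simp only [Finset.mul_sum, map_sum, mul_smul_comm, PowerSeries.coeff_smul, coeff_T] at key
  refine Eq.trans ?_ (key.trans ?_)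
  · refine Finset.sum_congr rfl fun j _ => ?_
    rw [sgen_eq, show d + 1 + N + j - (d + 1) = N + j by omega, mul_pow X,
      show (X : PowerSeries ℝ)^(j+1) * WW p q k ^ (j+1) = X^j * (X * WW p q k ^ (j+1)) by ring,
      add_comm N j, add_comm j N, coeff_X_pow_mul, cc, smul_eq_mul, smul_eq_mul]
    ring
  · rw [← Finset.Ico_add_one_right_eq_Icc, Finset.sum_Ico_eq_sum_range]
    refine Finset.sum_congr (by simp) fun l hl => ?_
    have hl : l ≤ d := by simpa [Nat.lt_succ_iff] using hl
    rw [add_comm 1 l, show d + 1 - (l + 1) = d - l by omega]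
    simp only [Nat.add_sub_cancel]
    rw [cc_flip]
    have hx : ∀ s : ℕ, ((d + 1 + N : ℕ) : ℝ) + ((l + 1 : ℕ) : ℝ) - ((d + 1 : ℕ) : ℝ) - (s : ℝ) =
        (N : ℝ) + ((l + 1 : ℕ) : ℝ) - (s : ℝ) := fun s => by push_cast; ring
    have hn : ∀ s : ℕ, d + 1 + N + (l + 1) - (d + 1) - s = N + (l + 1) - s := fun s => by omega
    simp only [hx, hn]
    have hsign : (-2 * q ^ k) ^ (d - l) = (-1 : ℝ) ^ d * (-1) ^ l * (2 * q ^ k) ^ (d - l) := by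
      rw [show -2 * q ^ k = (-1) * (2 * q ^ k) by ring, mul_pow]
      congr 1
      rw [← pow_add, show d + l = (d - l) + 2 * l by omega, pow_add, pow_mul]
      simp
    rw [hsign, smul_eq_mul, smul_eq_mul]
    ring
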